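/- arXiv:math/0503011 — 3 statements merged into one kernel-verified Lean document; each statement's English description precedes it below -/
import Mathlib

section
/- Let c = (c_1,…,c_k) and d = (d_1,…,d_l) be compositions of n and let M = (m_{ij}) ∈ 𝓜_{c,d}. Then X_{colr(M)} is the disjoint union, over σ ∈ C(M) ∩ X_d, of the sets X_c·σ = {ρσ : ρ ∈ X_c}: every element of X_{colr(M)} lies in exactly one such set X_c·σ, and conversely every product ρσ with ρ ∈ X_c and σ ∈ C(M) ∩ X_d belongs to X_{colr(M)}. -/
/-!
Statement 5: Solomon's coset decomposition for the symmetric group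
(Corollary `co:CombiSymmGp` of the paper).
-/

open Equiv Finset

/-- Partial sum `t_i = c_1 + ⋯ + c_i` of the parts of a composition with index `< i`. -/
def compPsum {m : ℕ} (c : Fin m → ℕ) (i : Fin m) : ℕ :=
  ∑ i' ∈ Finset.univ.filter (fun i' => i' < i), c i'

/-- `X_c`: the set of permutations of `Fin n` that are increasing on each of the blocks
of the composition `c` (a composition of `n`, possibly with parts equal to zero). -/
def Xset (n : ℕ) {m : ℕ} (c : Fin m → ℕ) : Set (Equiv.Perm (Fin n)) :=
  {σ | ∀ (i : Fin m) (a b : Fin n),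
    compPsum c i ≤ a.val → a < b → b.val < compPsum c i + c i → σ a < σ b}

/-- The double coset `C(M)` of `S_c\S_n/S_d` attached to a matrix `M` with row sums `c`
and column sums `d`:  permutations `σ` such that `m_{ij}` is the number of elements of the
`j`-th `d`-block whose image under `σ` lies in the `i`-th `c`-block. -/
def dblCoset (n : ℕ) {k l : ℕ} (c : Fin k → ℕ) (d : Fin l → ℕ) (M : Fin k → Fin l → ℕ) :
    Set (Equiv.Perm (Fin n)) :=
  {σ | ∀ i j, M i j =
    (Finset.univ.filter (fun x : Fin n =>
      compPsum d j ≤ x.val ∧ x.val < compPsum d j + d j ∧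
      compPsum c i ≤ (σ x).val ∧ (σ x).val < compPsum c i + c i)).card}

/-- The column reading `colr(M)` of a `k × l` matrix, as a composition (possibly with zero
parts) with `l * k` parts: `(m_{11}, m_{21}, …, m_{k1}, m_{12}, …, m_{kl})`. -/
def colr {k l : ℕ} (M : Fin k → Fin l → ℕ) : Fin (l * k) → ℕ := fun x =>
  have h1 : 0 < l * k := Nat.lt_of_le_of_lt (Nat.zero_le _) x.isLt
  have hk : 0 < k := by
    rcases Nat.eq_zero_or_pos k with h | h
    · subst h; simp at h1
    · exact h
  M ⟨x.val % k, Nat.mod_lt _ hk⟩ ⟨x.val / k, (Nat.div_lt_iff_lt_mul hk).mpr x.isLt⟩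

theorem aux_unique {n : ℕ} {α : Type*} [LinearOrder α] (f g : Fin n → α)
    (hf : Monotone f) (hg : Monotone g)
    (h : ∀ a, (univ.filter (fun x => f x = a)).card = (univ.filter (fun x => g x = a)).card) :
    f = g := by
  have e : ∀ a, Nonempty ({x // f x = a} ≃ {x // g x = a}) := by
    intro a
    refine ⟨Fintype.equivOfCardEq ?_⟩
    rw [Fintype.card_subtype, Fintype.card_subtype]
    exact h a
  let τ : Perm (Fin n) := (Equiv.sigmaFiberEquiv f).symm.trans
    ((Equiv.sigmaCongrRight fun a => (e a).some).trans (Equiv.sigmaFiberEquiv g))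
  have hτ : g ∘ τ = f := by
    funext x
    exact ((e (f x)).some ⟨x, rfl⟩).2
  have := Tuple.unique_monotone (f := g) (σ := τ) (τ := 1) (by rw [hτ]; exact hf) (by simpa using hg)
  rw [hτ] at this
  simpa using this

theorem aux_block {n m : ℕ} (c : Fin m → ℕ) (hc : ∑ i, c i = n) :
    ∃ p : Fin n → Fin m, Monotone p ∧
      (∀ x i, p x = i ↔ (compPsum c i ≤ x.val ∧ x.val < compPsum c i + c i)) ∧
      (∀ i, (univ.filter (fun x => p x = i)).card = c i) := by
  let S : ℕ → ℕ := fun t => ∑ i' ∈ univ.filter (fun i' : Fin m => i'.val < t), c i'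
  have hS0 : S 0 = 0 := by simp [S]
  have hSm : S m = n := by simp [S, hc]
  have hmono : Monotone S := by
    intro a b hab
    apply Finset.sum_le_sum_of_subset
    intro x
    simp only [mem_filter, mem_univ, true_and]
    omega
  have hp : ∀ i : Fin m, compPsum c i = S i.val := fun i => rfl
  have hsucc : ∀ i : Fin m, S (i.val + 1) = compPsum c i + c i := by
    intro i
    have : univ.filter (fun i' : Fin m => i'.val < i.val + 1)
        = insert i (univ.filter (fun i' : Fin m => i' < i)) := by
      ext x
      simp only [mem_filter, mem_univ, true_and, mem_insert, Fin.ext_iff, Fin.lt_def]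
      omega
    simp only [S, this, compPsum]
    rw [Finset.sum_insert (by simp), add_comm]
  have hex : ∀ x : Fin n, ∃ i : Fin m, compPsum c i ≤ x.val ∧ x.val < compPsum c i + c i := by
    intro x
    have hx : ∃ t, x.val < S t := ⟨m, by rw [hSm]; exact x.2⟩
    classical
    have h1 := Nat.find_spec hx
    have h2 : Nat.find hx ≤ m := Nat.find_min' hx (by rw [hSm]; exact x.2)
    have h0 : Nat.find hx ≠ 0 := by
      intro h
      rw [h, hS0] at h1
      omega
    have h3 := Nat.find_min hx (m := Nat.find hx - 1) (by omega)
    refine ⟨⟨Nat.find hx - 1, by omega⟩, ?_, ?_⟩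
    · rw [hp]; simpa using h3
    · rw [← hsucc]
      simp only
      rwa [Nat.sub_add_cancel (by omega)]
  choose p hp1 using hex
  have key : ∀ (x y : Fin n) (i j : Fin m), compPsum c i ≤ x.val → y.val < compPsum c j + c j →
      y ≤ x → j ≤ i ∨ i < j := fun _ _ i j _ _ _ => le_or_gt j i
  have mono2 : ∀ (x y : Fin n) (i j : Fin m), x ≤ y → compPsum c i ≤ x.val →
      y.val < compPsum c j + c j → i ≤ j := by
    intro x y i j hxy h1 h2
    by_contra hlt
    have h3 : S (j.val + 1) ≤ S i.val := hmono (by have := Fin.lt_def.1 (not_le.1 hlt); omega)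
    rw [hsucc, ← hp] at h3
    have := Fin.le_def.1 hxy
    omega
  have hiff : ∀ x i, p x = i ↔ (compPsum c i ≤ x.val ∧ x.val < compPsum c i + c i) := by
    intro x i
    constructor
    · rintro rfl; exact hp1 x
    · rintro ⟨h1, h2⟩
      exact le_antisymm (mono2 x x _ _ le_rfl (hp1 x).1 h2) (mono2 x x _ _ le_rfl h1 (hp1 x).2)
  refine ⟨p, ?_, hiff, ?_⟩
  · intro x y hxy
    exact mono2 x y _ _ hxy (hp1 x).1 (hp1 y).2
  · intro i
    have hle : compPsum c i + c i ≤ n := by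
      rw [← hsucc, ← hSm]; exact hmono i.2
    have : ((univ.filter (fun x => p x = i)).map Fin.valEmbedding)
        = Finset.Ico (compPsum c i) (compPsum c i + c i) := by
      ext y
      simp only [mem_map, mem_filter, mem_univ, true_and, hiff, Fin.valEmbedding_apply, mem_Ico]
      constructor
      · rintro ⟨a, h, rfl⟩; exact h
      · intro h; exact ⟨⟨y, by omega⟩, h, rfl⟩
    rw [← Finset.card_map Fin.valEmbedding, this]
    simp

theorem aux_X {n m : ℕ} (c : Fin m → ℕ) (p : Fin n → Fin m) (hm : Monotone p)
    (hp : ∀ x i, p x = i ↔ (compPsum c i ≤ x.val ∧ x.val < compPsum c i + c i))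
    (σ : Perm (Fin n)) : σ ∈ Xset n c ↔ ∀ a b, a < b → p a = p b → σ a < σ b := by
  constructor
  · intro h a b hab he
    exact h (p a) a b ((hp a _).1 rfl).1 hab ((hp b _).1 he.symm).2
  · intro h i a b h1 h2 h3
    have h4 := Fin.lt_def.1 h2
    apply h a b h2
    rw [(hp a i).2 ⟨h1, by omega⟩, (hp b i).2 ⟨by omega, h3⟩]

theorem solomon_coset_decomposition
    {n k l : ℕ} (c : Fin k → ℕ) (d : Fin l → ℕ)
    (hc : ∀ i, 0 < c i) (hd : ∀ j, 0 < d j)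
    (hcn : ∑ i, c i = n) (hdn : ∑ j, d j = n)
    (M : Fin k → Fin l → ℕ)
    (hrow : ∀ i, ∑ j, M i j = c i) (hcol : ∀ j, ∑ i, M i j = d j) :
    (∀ π : Equiv.Perm (Fin n), π ∈ Xset n (colr M) →
      ∃! σ : Equiv.Perm (Fin n),
        (σ ∈ dblCoset n c d M ∧ σ ∈ Xset n d) ∧ ∃ ρ ∈ Xset n c, π = ρ * σ) ∧
    (∀ ρ ∈ Xset n c, ∀ σ : Equiv.Perm (Fin n),
      σ ∈ dblCoset n c d M → σ ∈ Xset n d → ρ * σ ∈ Xset n (colr M)) := by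
  obtain ⟨p, pm, pi, pc⟩ := aux_block c hcn
  obtain ⟨q, qm, qi, qc⟩ := aux_block d hdn
  have hcolr : ∀ x, colr M x = M x.modNat x.divNat := fun x => rfl
  have hsum : ∑ x, colr M x = n := by
    rw [← finProdFinEquiv.sum_comp, Fintype.sum_prod_type, ← hdn]
    refine Finset.sum_congr rfl fun j _ => ?_
    rw [← hcol j]
    refine Finset.sum_congr rfl fun i _ => ?_
    rw [hcolr]
    have := finProdFinEquiv.symm_apply_apply (j, i)
    rw [finProdFinEquiv_symm_apply, Prod.mk.injEq] at this
    rw [this.1, this.2]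
  obtain ⟨E, Em, Ei, Ec⟩ := aux_block (colr M) hsum
  let r : Fin n → Fin k := fun x => (E x).modNat
  have hE : ∀ x j i, ((E x).divNat = j ∧ r x = i) ↔ E x = finProdFinEquiv (j, i) := by
    intro x j i
    rw [← Equiv.symm_apply_eq, finProdFinEquiv_symm_apply, Prod.mk.injEq]
  have hfib : ∀ i j, (univ.filter (fun x => (E x).divNat = j ∧ r x = i)).card = M i j := by
    intro i j
    simp only [hE, Ec, hcolr]
    have := finProdFinEquiv.symm_apply_apply (j, i)
    rw [finProdFinEquiv_symm_apply, Prod.mk.injEq] at this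
    rw [this.1, this.2]
  have hq : (fun x => (E x).divNat) = q := by
    apply aux_unique
    · intro x y hxy
      exact Nat.div_le_div_right (Fin.le_def.1 (Em hxy))
    · exact qm
    · intro j
      rw [qc, ← hcol, Finset.card_eq_sum_card_fiberwise (f := r) (t := univ) (by simp)]
      refine Finset.sum_congr rfl fun i _ => ?_
      rw [Finset.filter_filter, hfib]
  have hq' : ∀ x, (E x).divNat = q x := fun x => congrFun hq x
  simp only [hq'] at hE hfib
  have hrc : ∀ i, (univ.filter (fun x => r x = i)).card = c i := by
    intro i
    rw [← hrow, Finset.card_eq_sum_card_fiberwise (f := q) (t := univ) (by simp)]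
    refine Finset.sum_congr rfl fun j _ => ?_
    rw [Finset.filter_filter, ← hfib]
    congr 1
    ext x
    simp [and_comm]
  have hEeq : ∀ a b, E a = E b ↔ q a = q b ∧ r a = r b := by
    intro a b
    rw [(hE b _ _).1 ⟨rfl, rfl⟩, ← hE]
  have rm : ∀ a b, a ≤ b → q a = q b → r a ≤ r b := by
    intro a b hab h
    have h1 := Fin.le_def.1 (Em hab)
    have h2 : (E a).val / k = (E b).val / k := by
      rw [← hq', ← hq'] at h
      exact congrArg Fin.val h
    have h3 := Nat.div_add_mod (E a).val k
    have h4 := Nat.div_add_mod (E b).val k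
    rw [h2] at h3
    change (E a).val % k ≤ (E b).val % k
    omega
  have hdbl : ∀ σ : Perm (Fin n), σ ∈ dblCoset n c d M ↔
      ∀ i j, M i j = (univ.filter (fun x => q x = j ∧ p (σ x) = i)).card := by
    intro σ
    simp only [dblCoset, Set.mem_setOf_eq, pi, qi, and_assoc]
  have hpr : ∀ σ : Perm (Fin n), σ ∈ dblCoset n c d M → σ ∈ Xset n d → ∀ x, p (σ x) = r x := by
    intro σ h1 h2
    rw [hdbl] at h1
    rw [aux_X d q qm qi] at h2
    have : (fun x => toLex (q x, p (σ x))) = (fun x => toLex (q x, r x)) := by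
      apply aux_unique
      · intro a b hab
        rw [Prod.Lex.toLex_le_toLex]
        rcases (qm hab).lt_or_eq with h | h
        · exact Or.inl h
        · refine Or.inr ⟨h, pm ?_⟩
          rcases hab.lt_or_eq with h' | h'
          · exact (h2 a b h' h).le
          · rw [h']
      · intro a b hab
        rw [Prod.Lex.toLex_le_toLex]
        rcases (qm hab).lt_or_eq with h | h
        · exact Or.inl h
        · exact Or.inr ⟨h, rm a b hab h⟩
      · intro z
        obtain ⟨⟨j, i⟩, rfl⟩ := toLex.surjective z
        simp only [toLex_inj, Prod.mk.injEq]
        rw [← h1, hfib]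
    intro x
    have h := congrFun this x
    simp only [toLex_inj, Prod.mk.injEq] at h
    exact h.2
  constructor
  · intro π hπ
    rw [aux_X _ E Em Ei] at hπ
    let f : Fin n → Fin k ×ₗ Fin n := fun x => toLex (r x, π x)
    have finj : Function.Injective f := by
      intro a b h
      simp only [f, toLex_inj, Prod.mk.injEq] at h
      exact π.injective h.2
    let τ := Tuple.sort f
    have hτ : StrictMono (f ∘ τ) :=
      (Tuple.monotone_sort f).strictMono_of_injective (finj.comp τ.injective)
    have hτ' : ∀ a b, f a < f b ↔ τ⁻¹ a < τ⁻¹ b := by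
      intro a b
      rw [← hτ.lt_iff_lt]
      simp
    have hrp : r ∘ τ = p := by
      apply aux_unique
      · intro a b hab
        have := hτ.monotone hab
        simp only [f, Function.comp, Prod.Lex.toLex_le_toLex] at this
        rcases this with h | h
        · exact h.le
        · exact h.1.le
      · exact pm
      · intro i
        rw [pc, ← hrc]
        rw [← Finset.card_map τ.toEmbedding]
        congr 1
        ext x
        simp only [mem_map, mem_filter, mem_univ, true_and, Function.comp, Equiv.coe_toEmbedding]
        constructor
        · rintro ⟨a, h, rfl⟩; exact h
        · intro h; exact ⟨τ⁻¹ x, by simpa using h, by simp⟩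
    have hpσ : ∀ x, p (τ⁻¹ x) = r x := by
      intro x
      rw [← hrp]; simp
    refine ⟨τ⁻¹, ⟨⟨?_, ?_⟩, π * τ, ?_, by simp⟩, ?_⟩
    · rw [hdbl]
      intro i j
      simp only [hpσ, hfib]
    · rw [aux_X d q qm qi]
      intro a b hab h
      rw [← hτ']
      simp only [f, Prod.Lex.toLex_lt_toLex]
      rcases (rm a b hab.le h).lt_or_eq with h' | h'
      · exact Or.inl h'
      · exact Or.inr ⟨h', hπ a b hab ((hEeq a b).2 ⟨h, h'⟩)⟩
    · rw [aux_X c p pm pi]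
      intro a b hab h
      have h1 := hτ hab
      rw [← hrp] at h
      simp only [Function.comp] at h
      simp only [f, Function.comp, Prod.Lex.toLex_lt_toLex] at h1
      rcases h1 with h1 | h1
      · exact absurd h h1.ne
      · exact h1.2
    · rintro σ ⟨⟨h1, h2⟩, ρ, hρ, hρσ⟩
      have h3 := hpr σ h1 h2
      rw [aux_X c p pm pi] at hρ
      have hmon : Monotone (f ∘ (σ⁻¹ : Perm (Fin n))) := by
        apply StrictMono.monotone
        intro a b hab
        have hs : ∀ y, σ (σ⁻¹ y) = y := fun y => by simp
        simp only [f, Function.comp, Prod.Lex.toLex_lt_toLex, ← h3, hρσ, Perm.mul_apply, hs]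
        rcases (pm hab.le).lt_or_eq with h | h
        · exact Or.inl h
        · exact Or.inr ⟨h, hρ a b hab h⟩
      have h4 := Tuple.unique_monotone hmon (Tuple.monotone_sort f)
      have h5 : σ⁻¹ = τ := Equiv.ext fun x => finj (congrFun h4 x)
      rw [← h5, inv_inv]
  · intro ρ hρ σ h1 h2
    have h3 := hpr σ h1 h2
    rw [aux_X c p pm pi] at hρ
    rw [aux_X d q qm qi] at h2
    rw [aux_X _ E Em Ei]
    intro a b hab h
    rw [hEeq] at h
    exact hρ _ _ (h2 a b hab h.1) (by rw [h3, h3, h.2])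
end

section
/- For every finite group H, the representation ring R(H) has trivial Jacobson radical: the Jacobson radical of the commutative ring R(H) is the zero ideal. -/
/-!
Statement 10: the representation ring of a finite group has trivial Jacobson radical
(Proposition `pr:RepRingWoRad` of the paper).
-/

noncomputable section

/-- The representation ring `R(H)` of a finite group `H`: the subring of the ring `ℂ^H` of
`ℂ`-valued functions on `H` (with pointwise operations) generated by the characters of the
finite-dimensional complex representations of `H`; as a `ℤ`-module it is spanned by the
irreducible characters, so its elements are exactly the virtual complex characters of `H`. -/
def RepRing (H : Type) [Group H] : Subring (H → ℂ) :=
  Subring.closure {f : H → ℂ | ∃ V : FDRep ℂ H, f = FDRep.character V}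

open Polynomial in
lemma repRing_char_isIntegral (H : Type) [Group H] [Finite H] (V : FDRep ℂ H) (h : H) :
    IsIntegral ℤ (FDRep.character V h) := by
  have e : FDRep.character V h = LinearMap.trace ℂ V (V.ρ h) := rfl
  rw [e, Module.End.trace_eq_sum_roots_charpoly_of_splits (IsAlgClosed.splits _)]
  apply IsIntegral.multiset_sum
  intro μ hμ
  have hev : Module.End.HasEigenvalue (V.ρ h) μ := by
    rw [Module.End.hasEigenvalue_iff_isRoot_charpoly]
    exact isRoot_of_mem_roots hμ
  obtain ⟨v, hv⟩ := hev.exists_hasEigenvector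
  have hn : 0 < orderOf h := orderOf_pos h
  have hp := hv.pow_apply (orderOf h)
  have h1 : (V.ρ h) ^ orderOf h = 1 := by
    rw [← map_pow, pow_orderOf_eq_one, map_one]
  rw [h1, Module.End.one_apply] at hp
  have h2 : (μ ^ orderOf h - 1) • v = 0 := by
    rw [sub_smul, ← hp, one_smul, sub_self]
  have h3 : μ ^ orderOf h = 1 := by
    rcases smul_eq_zero.1 h2 with h4 | h4
    · exact sub_eq_zero.1 h4
    · exact absurd h4 hv.2
  apply IsIntegral.of_pow hn
  rw [h3]
  exact isIntegral_one

open Polynomial in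
lemma repRing_pi_isIntegral (H : Type) [Finite H] (f : H → ℂ)
    (hf : ∀ h, IsIntegral ℤ (f h)) : IsIntegral ℤ f := by
  have := Fintype.ofFinite H
  choose p hm hp using hf
  refine ⟨∏ h, p h, monic_prod_of_monic _ _ (fun i _ => hm i), ?_⟩
  rw [← aeval_def]
  funext h
  have : (aeval f (∏ h, p h)) h = aeval (f h) (∏ h, p h) :=
    (aeval_algHom_apply (Pi.evalAlgHom ℤ (fun _ : H => ℂ) h) f _).symm
  rw [this, map_prod]
  exact Finset.prod_eq_zero (Finset.mem_univ h) (hp h)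

lemma repRing_int_jacobson : IsJacobsonRing ℤ := by
  rw [isJacobsonRing_iff_prime_eq]
  intro P hP
  by_cases h0 : P = ⊥
  · subst h0
    rw [eq_bot_iff]
    intro x hx
    have h1 := Ideal.mem_jacobson_bot.1 hx x
    rw [Int.isUnit_iff] at h1
    have : x * x = 0 := by
      rcases h1 with h | h
      · linarith
      · nlinarith [mul_self_nonneg x]
    simpa using this
  · have := hP.isMaximal h0
    exact Ideal.jacobson_eq_self_of_isMaximal

/-- For every finite group `H`, the Jacobson radical of the commutative
ring `R(H)` (the intersection of all its maximal ideals) is the zero ideal. -/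
theorem repRing_jacobson_eq_bot (H : Type) [Group H] [Finite H] :
    (⊥ : Ideal (RepRing H)).jacobson = ⊥ := by
  have hint : Algebra.IsIntegral ℤ (RepRing H) := by
    constructor
    rintro ⟨f, hf⟩
    have hle : RepRing H ≤ (integralClosure ℤ (H → ℂ)).toSubring := by
      refine Subring.closure_le.2 ?_
      rintro _ ⟨V, rfl⟩
      exact repRing_pi_isIntegral H _ (repRing_char_isIntegral H V)
    have h1 : IsIntegral ℤ f := hle hf
    obtain ⟨p, hm, hp⟩ := h1
    refine ⟨p, hm, ?_⟩
    apply Subtype.val_injective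
    have := Polynomial.hom_eval₂ p (algebraMap ℤ (RepRing H)) (RepRing H).subtype ⟨f, hf⟩
    refine this.trans ?_
    refine Eq.trans ?_ hp
    congr 1
  have := repRing_int_jacobson
  have hJ : IsJacobsonRing (RepRing H) := isJacobsonRing_of_isIntegral (R := ℤ)
  refine hJ.out ?_
  intro x hx
  obtain ⟨n, hn⟩ := hx
  have h0 : x ^ n = 0 := Ideal.mem_bot.1 hn
  have hr : IsReduced (RepRing H) :=
    isReduced_of_injective (RepRing H).subtype Subtype.val_injective
  exact Ideal.mem_bot.2 (IsReduced.eq_zero x ⟨n, h0⟩)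
end
end

section
/- Two words w and w' with letters in 𝒜×B have the same insertion B-tableau P under the Robinson–Schensted–Okada correspondence if and only if there exists a finite sequence of words w = w_1, w_2, …, w_k = w' with w_j ~K w_{j+1} (coloured Knuth relations) for each j. -/
/-!
Statement 16: Knuth relations for the Robinson–Schensted–Okada correspondence
(Proposition `pr:KnuthRSORel` of the paper).
-/

variable {A : Type*} [LinearOrder A] {B : Type*} [DecidableEq B]

/-- Row insertion (Schensted bumping) of a letter `x` into a row `r`:
`x` replaces the leftmost entry of `r` strictly greater than `x`, which is bumped out;
if there is no such entry, `x` is appended at the end of the row. -/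
def rowInsert : List A → A → List A × Option A
  | [], x => ([x], none)
  | y :: ys, x =>
    if x < y then (x :: ys, some y)
    else
      let p := rowInsert ys x
      (y :: p.1, p.2)

/-- Insertion of a letter into a tableau (given as its list of rows), by successive
row bumping. -/
def tabInsert : List (List A) → A → List (List A)
  | [], x => [[x]]
  | r :: rs, x =>
    match rowInsert r x with
    | (r', none) => r' :: rs
    | (r', some y) => r' :: tabInsert rs y

/-- The Robinson–Schensted insertion tableau of a word. -/
def RSInsertionTableau (w : List A) : List (List A) :=
  w.foldl tabInsert []

/-- The insertion `B`-tableau `P(w) = (P_b)_{b ∈ B}` of a word `w` with letters in `𝒜 × B`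
under the Robinson–Schensted–Okada correspondence: `P_b` is the Robinson–Schensted
insertion tableau of the subword of first components taken at the positions of colour `b`. -/
def RSOInsertion (w : List (A × B)) : B → List (List A) := fun b =>
  RSInsertionTableau ((w.filter (fun x => x.2 = b)).map Prod.fst)

/-- An (ordinary) Knuth relation on triples of letters:
`{acb, cab}` with `a ≤ b < c`, or `{bac, bca}` with `a < b ≤ c`. -/
def KnuthTriple (u u' : A × A × A) : Prop :=
  (∃ a b c : A, a ≤ b ∧ b < c ∧
    ((u = (a, c, b) ∧ u' = (c, a, b)) ∨ (u = (c, a, b) ∧ u' = (a, c, b)))) ∨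
  (∃ a b c : A, a < b ∧ b ≤ c ∧
    ((u = (b, a, c) ∧ u' = (b, c, a)) ∨ (u = (b, c, a) ∧ u' = (b, a, c))))

/-- The coloured Knuth relations for words with letters in `𝒜 × B`:
(c) exchange of two adjacent letters of different colours;
(d) an ordinary Knuth relation on three consecutive letters of the same colour. -/
def ColouredKnuthStep (w w' : List (A × B)) : Prop :=
  (∃ (u v : List (A × B)) (x y : A × B), x.2 ≠ y.2 ∧
      w = u ++ x :: y :: v ∧ w' = u ++ y :: x :: v) ∨
  (∃ (u v : List (A × B)) (b : B) (a₁ a₂ a₃ a₁' a₂' a₃' : A),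
      w = u ++ (a₁, b) :: (a₂, b) :: (a₃, b) :: v ∧
      w' = u ++ (a₁', b) :: (a₂', b) :: (a₃', b) :: v ∧
      KnuthTriple (a₁, a₂, a₃) (a₁', a₂', a₃'))

section Helpers

theorem ri_cons_lt {x y : A} (ys : List A) (h : x < y) :
    rowInsert (y :: ys) x = (x :: ys, some y) := by
  simp [rowInsert, h]

theorem ri_cons_ge {x y : A} (ys : List A) (h : y ≤ x) :
    rowInsert (y :: ys) x = (y :: (rowInsert ys x).1, (rowInsert ys x).2) := by
  simp [rowInsert, not_lt.mpr h]

theorem ri_lb (r : List A) (x l : A) (hr : ∀ y ∈ r, l ≤ y) (hx : l ≤ x) :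
    ∀ y ∈ (rowInsert r x).1, l ≤ y := by
  induction r with
  | nil => simp [rowInsert, hx]
  | cons z zs ih =>
    simp only [List.mem_cons, forall_eq_or_imp] at hr
    rcases lt_or_ge x z with h | h
    · rw [ri_cons_lt _ h]; simpa using ⟨hx, hr.2⟩
    · rw [ri_cons_ge _ h]; simpa using ⟨hr.1, ih hr.2⟩

theorem ri_sorted (r : List A) (x : A) (hr : r.Pairwise (· ≤ ·)) :
    (rowInsert r x).1.Pairwise (· ≤ ·) := by
  induction r with
  | nil => simp [rowInsert]
  | cons z zs ih =>
    rw [List.pairwise_cons] at hr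
    rcases lt_or_ge x z with h | h
    · rw [ri_cons_lt _ h]
      exact List.pairwise_cons.2 ⟨fun y hy => h.le.trans (hr.1 y hy), hr.2⟩
    · rw [ri_cons_ge _ h]
      exact List.pairwise_cons.2 ⟨ri_lb zs x z hr.1 h, ih hr.2⟩

theorem ri_mem (r : List A) (x y : A) (h : (rowInsert r x).2 = some y) : y ∈ r ∧ x < y := by
  induction r with
  | nil => simp [rowInsert] at h
  | cons z zs ih =>
    rcases lt_or_ge x z with h' | h'
    · rw [ri_cons_lt _ h'] at h; simp at h; subst h; simp [h']
    · rw [ri_cons_ge _ h'] at h; have := ih h; simp [this]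

/-- Inserting `c` then a smaller letter `b`. -/
theorem ri_desc (r : List A) (b c : A) (hr : r.Pairwise (· ≤ ·)) (hbc : b < c) :
    ∃ d, (rowInsert (rowInsert r c).1 b).2 = some d ∧ d ≤ c := by
  induction r with
  | nil => exact ⟨c, by simp [rowInsert, hbc]⟩
  | cons z zs ih =>
    rw [List.pairwise_cons] at hr
    rcases lt_or_ge c z with h | h
    · rw [ri_cons_lt _ h]; exact ⟨c, by rw [ri_cons_lt _ hbc], le_rfl⟩
    · rw [ri_cons_ge _ h]
      rcases lt_or_ge b z with h' | h'
      · exact ⟨z, by rw [ri_cons_lt _ h'], h⟩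
      · rw [ri_cons_ge _ h']; exact ih hr.2

/-- Inserting `b` then a weakly larger letter `c`. -/
theorem ri_asc (r : List A) (b c d : A) (hr : r.Pairwise (· ≤ ·)) (hbc : b ≤ c)
    (h : (rowInsert (rowInsert r b).1 c).2 = some d) :
    ∃ e, (rowInsert r b).2 = some e ∧ e ≤ d := by
  induction r with
  | nil => simp [rowInsert, not_lt.mpr hbc] at h
  | cons z zs ih =>
    rw [List.pairwise_cons] at hr
    rcases lt_or_ge b z with h' | h'
    · rw [ri_cons_lt _ h'] at h ⊢
      rw [ri_cons_ge _ hbc] at h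
      exact ⟨z, rfl, hr.1 _ (ri_mem _ _ _ h).1⟩
    · rw [ri_cons_ge _ h'] at h ⊢
      rw [ri_cons_ge _ (h'.trans hbc)] at h
      exact ih hr.2 h

/-- Inserting a word in a row, recording the bumped word. -/
def rowW : List A → List A → List A × List A
  | r, [] => (r, [])
  | r, x :: xs =>
    ((rowW (rowInsert r x).1 xs).1, (rowInsert r x).2.toList ++ (rowW (rowInsert r x).1 xs).2)

theorem foldl_tab (w r : List A) (rs : List (List A)) :
    w.foldl tabInsert (r :: rs) = (rowW r w).1 :: (rowW r w).2.foldl tabInsert rs := by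
  induction w generalizing r rs with
  | nil => simp [rowW]
  | cons x xs ih =>
    simp only [List.foldl_cons, tabInsert, rowW]
    rcases hp : rowInsert r x with ⟨r', _ | y⟩ <;> simp [ih]

def K3 (m m' : List A) : Prop :=
  (∃ a b c : A, a ≤ b ∧ b < c ∧ m = [a, c, b] ∧ m' = [c, a, b]) ∨
  (∃ a b c : A, a < b ∧ b ≤ c ∧ m = [b, a, c] ∧ m' = [b, c, a])

theorem row_k1 (r : List A) (hr : r.Pairwise (· ≤ ·)) (a b c : A) (hab : a ≤ b) (hbc : b < c) :
    (rowW r [a, c, b]).1 = (rowW r [c, a, b]).1 ∧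
    ((rowW r [a, c, b]).2 = (rowW r [c, a, b]).2 ∨
      K3 (rowW r [a, c, b]).2 (rowW r [c, a, b]).2 ∨
      K3 (rowW r [c, a, b]).2 (rowW r [a, c, b]).2) := by
  have hac := hab.trans_lt hbc
  induction r with
  | nil => simp [rowW, rowInsert, hac, hbc, not_lt.mpr hab, not_lt.mpr hac.le]
  | cons y ys ih =>
    rw [List.pairwise_cons] at hr
    simp only [rowW] at ih ⊢
    rcases le_or_gt y a with hya | hya
    · have hyb := hya.trans hab
      have hyc := hya.trans hac.le
      simp only [ri_cons_ge _ hya, ri_cons_ge _ hyb, ri_cons_ge _ hyc]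
      have := ih hr.2
      exact ⟨by rw [this.1], this.2⟩
    · simp only [ri_cons_lt _ hya, ri_cons_ge _ hac.le, ri_cons_ge _ hab]
      rcases lt_or_ge c y with hcy | hcy
      · simp only [ri_cons_lt _ hcy, ri_cons_lt _ hac, ri_cons_ge _ hab]
        rcases ys with _ | ⟨q, qs⟩
        · simp [rowInsert, hbc]
        · have hyq : y ≤ q := hr.1 q (by simp)
          have hcq := hcy.trans_le hyq
          simp only [ri_cons_lt _ hcq, ri_cons_lt _ hbc, ri_cons_lt _ (hbc.trans hcq)]
          refine ⟨trivial, Or.inr (Or.inr (Or.inr ⟨c, y, q, hcy, hyq, ?_, ?_⟩))⟩ <;> simp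
      · simp only [ri_cons_ge _ hcy, ri_cons_lt _ hya, ri_cons_ge _ hab]
        refine ⟨trivial, ?_⟩
        obtain ⟨d, hd, hdc⟩ := ri_desc ys b c hr.2 hbc
        have hyd := ri_lb ys c y hr.1 hcy d (ri_mem _ _ _ hd).1
        rcases hc : (rowInsert ys c).2 with _ | e
        · left; simp
        · right; left; left
          exact ⟨y, d, e, hyd, hdc.trans_lt (ri_mem _ _ _ hc).2, by simp [hd], by simp [hd]⟩

theorem row_k2 (r : List A) (hr : r.Pairwise (· ≤ ·)) (a b c : A) (hab : a < b) (hbc : b ≤ c) :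
    (rowW r [b, a, c]).1 = (rowW r [b, c, a]).1 ∧
    ((rowW r [b, a, c]).2 = (rowW r [b, c, a]).2 ∨
      K3 (rowW r [b, a, c]).2 (rowW r [b, c, a]).2) := by
  have hac := hab.trans_le hbc
  induction r with
  | nil => simp [rowW, rowInsert, hab, not_lt.mpr hbc, not_lt.mpr hac.le]
  | cons y ys ih =>
    rw [List.pairwise_cons] at hr
    simp only [rowW] at ih ⊢
    rcases le_or_gt y a with hya | hya
    · have hyb := hya.trans hab.le
      have hyc := hya.trans hac.le
      simp only [ri_cons_ge _ hya, ri_cons_ge _ hyb, ri_cons_ge _ hyc]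
      have := ih hr.2
      exact ⟨by rw [this.1], this.2⟩
    · rcases lt_or_ge b y with hby | hby
      · simp only [ri_cons_lt _ hby, ri_cons_lt _ hab, ri_cons_ge _ hac.le, ri_cons_ge _ hbc]
        refine ⟨trivial, ?_⟩
        rcases hc : (rowInsert ys c).2 with _ | e
        · left; simp
        · right; right
          exact ⟨b, y, e, hby, hr.1 e (ri_mem _ _ _ hc).1, by simp, by simp⟩
      · simp only [ri_cons_ge _ hby, ri_cons_lt _ hya, ri_cons_ge _ hac.le,
          ri_cons_ge _ (hby.trans hbc)]
        refine ⟨trivial, ?_⟩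
        rcases hc : (rowInsert (rowInsert ys b).1 c).2 with _ | e
        · left; simp
        · obtain ⟨d, hd, hde⟩ := ri_asc ys b c e hr.2 hbc hc
          right; right
          exact ⟨y, d, e, hby.trans_lt (ri_mem _ _ _ hd).2, hde, by simp [hd], by simp [hd]⟩

theorem tab_k3 (T : List (List A)) (hT : ∀ r ∈ T, r.Pairwise (· ≤ ·)) (m m' : List A)
    (h : K3 m m') : m.foldl tabInsert T = m'.foldl tabInsert T := by
  induction T generalizing m m' with
  | nil =>
    rcases h with ⟨a, b, c, hab, hbc, rfl, rfl⟩ | ⟨a, b, c, hab, hbc, rfl, rfl⟩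
    · have hac := hab.trans_lt hbc
      simp [tabInsert, rowInsert, hac, hbc, not_lt.mpr hab, not_lt.mpr hac.le]
    · have hac := hab.trans_le hbc
      simp [tabInsert, rowInsert, hab, not_lt.mpr hbc, not_lt.mpr hac.le]
  | cons r rs ih =>
    simp only [List.mem_cons, forall_eq_or_imp] at hT
    rw [foldl_tab, foldl_tab]
    rcases h with ⟨a, b, c, hab, hbc, rfl, rfl⟩ | ⟨a, b, c, hab, hbc, rfl, rfl⟩
    · obtain ⟨h1, h2 | h2 | h2⟩ := row_k1 r hT.1 a b c hab hbc
      · rw [h1, h2]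
      · rw [h1, ih hT.2 _ _ h2]
      · rw [h1, ih hT.2 _ _ h2]
    · obtain ⟨h1, h2 | h2⟩ := row_k2 r hT.1 a b c hab hbc
      · rw [h1, h2]
      · rw [h1, ih hT.2 _ _ h2]

theorem tab_sorted (T : List (List A)) (hT : ∀ r ∈ T, r.Pairwise (· ≤ ·)) (x : A) :
    ∀ r ∈ tabInsert T x, r.Pairwise (· ≤ ·) := by
  induction T generalizing x with
  | nil => simp [tabInsert]
  | cons r rs ih =>
    simp only [List.mem_cons, forall_eq_or_imp] at hT
    have h1 := ri_sorted r x hT.1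
    rw [tabInsert]
    rcases hp : rowInsert r x with ⟨r', _ | y⟩ <;> rw [hp] at h1
    · simpa using ⟨h1, hT.2⟩
    · simpa using ⟨h1, ih hT.2 y⟩

theorem foldl_sorted (w : List A) (T : List (List A)) (hT : ∀ r ∈ T, r.Pairwise (· ≤ ·)) :
    ∀ r ∈ w.foldl tabInsert T, r.Pairwise (· ≤ ·) := by
  induction w generalizing T with
  | nil => simpa using hT
  | cons x xs ih => exact ih _ (tab_sorted T hT x)

theorem RS_k3 (u v m m' : List A) (h : K3 m m') :
    RSInsertionTableau (u ++ m ++ v) = RSInsertionTableau (u ++ m' ++ v) := by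
  simp only [RSInsertionTableau, List.foldl_append]
  rw [tab_k3 _ (foldl_sorted u [] (by simp)) m m' h]

theorem kt_k3 (a₁ a₂ a₃ a₁' a₂' a₃' : A) :
    KnuthTriple (a₁, a₂, a₃) (a₁', a₂', a₃') ↔
      K3 [a₁, a₂, a₃] [a₁', a₂', a₃'] ∨ K3 [a₁', a₂', a₃'] [a₁, a₂, a₃] := by
  simp only [KnuthTriple, K3, Prod.mk.injEq, List.cons.injEq, and_true]
  grind

theorem kt_RS (u v : List A) (a₁ a₂ a₃ a₁' a₂' a₃' : A)
    (h : KnuthTriple (a₁, a₂, a₃) (a₁', a₂', a₃')) :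
    RSInsertionTableau (u ++ [a₁, a₂, a₃] ++ v) =
      RSInsertionTableau (u ++ [a₁', a₂', a₃'] ++ v) := by
  rcases (kt_k3 _ _ _ _ _ _).1 h with h | h
  · exact RS_k3 _ _ _ _ h
  · exact (RS_k3 _ _ _ _ h).symm

theorem step_RSO (w w' : List (A × B)) (h : ColouredKnuthStep w w') :
    RSOInsertion w = RSOInsertion w' := by
  funext c
  simp only [RSOInsertion]
  rcases h with ⟨u, v, x, y, hxy, rfl, rfl⟩ | ⟨u, v, b, a₁, a₂, a₃, a₁', a₂', a₃', rfl, rfl, h⟩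
  · congr 2
    simp only [List.filter_append, List.filter_cons]
    by_cases hx : x.2 = c <;> by_cases hy : y.2 = c <;> simp [hx, hy]
    exact absurd (hx.trans hy.symm) hxy
  · by_cases hb : b = c
    · simpa [List.filter_cons, hb] using kt_RS _ _ _ _ _ _ _ _ h
    · simp [List.filter_cons, hb]

/-! Converse direction. -/

abbrev CK (w w' : List (A × B)) : Prop := Relation.ReflTransGen ColouredKnuthStep w w'

theorem step_symm (w w' : List (A × B)) (h : ColouredKnuthStep w w') :
    ColouredKnuthStep w' w := by
  rcases h with ⟨u, v, x, y, hxy, rfl, rfl⟩ | ⟨u, v, b, a₁, a₂, a₃, a₁', a₂', a₃', rfl, rfl, h⟩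
  · exact Or.inl ⟨u, v, y, x, hxy.symm, rfl, rfl⟩
  · refine Or.inr ⟨u, v, b, _, _, _, _, _, _, rfl, rfl, ?_⟩
    rw [kt_k3] at h ⊢
    exact h.symm

theorem CK.symm' {w w' : List (A × B)} (h : CK w w') : CK w' w := by
  induction h with
  | refl => exact .refl
  | tail _ h ih => exact .head (step_symm _ _ h) ih

theorem step_ctx (p q w w' : List (A × B)) (h : ColouredKnuthStep w w') :
    ColouredKnuthStep (p ++ w ++ q) (p ++ w' ++ q) := by
  rcases h with ⟨u, v, x, y, hxy, rfl, rfl⟩ | ⟨u, v, b, a₁, a₂, a₃, a₁', a₂', a₃', rfl, rfl, h⟩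
  · exact Or.inl ⟨p ++ u, v ++ q, x, y, hxy, by simp, by simp⟩
  · exact Or.inr ⟨p ++ u, v ++ q, b, _, _, _, _, _, _, by simp, by simp, h⟩

theorem CK.ctx (p q : List (A × B)) {w w' : List (A × B)} (h : CK w w') :
    CK (p ++ w ++ q) (p ++ w' ++ q) := by
  induction h with
  | refl => exact .refl
  | tail _ h ih => exact .tail ih (step_ctx p q _ _ h)

theorem CK.app {u u' v v' : List (A × B)} (h : CK u u') (h' : CK v v') :
    CK (u ++ v) (u' ++ v') := by
  have h1 := CK.ctx [] v h
  have h2 := CK.ctx u' [] h'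
  simp only [List.nil_append, List.append_nil] at h1 h2
  exact h1.trans h2

theorem step_k3 (b : B) (v m m' : List A) (h : K3 m m' ∨ K3 m' m) :
    CK ((m ++ v).map (·, b)) ((m' ++ v).map (·, b)) := by
  have key : ∀ m m' : List A, K3 m m' →
      CK ((m ++ v).map (·, b)) ((m' ++ v).map (·, b)) := by
    intro m m' h
    have h0 := h
    rcases h with ⟨x, y, z, hxy, hyz, rfl, rfl⟩ | ⟨x, y, z, hxy, hyz, rfl, rfl⟩ <;>
    exact .single (Or.inr ⟨[], v.map (·, b), b, _, _, _, _, _, _, rfl,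
      rfl, (kt_k3 _ _ _ _ _ _).2 (Or.inl h0)⟩)
  rcases h with h | h
  · exact key _ _ h
  · exact (key _ _ h).symm'

/-- If `x` is smaller than the first letter `z` of the sorted word `z :: zs`, moving past. -/
theorem ck_small (b : B) (zs : List A) (x z : A) (hz : (z :: zs).Pairwise (· ≤ ·)) (hx : x < z) :
    CK ((z :: (zs ++ [x])).map (·, b)) ((z :: x :: zs).map (·, b)) := by
  induction zs generalizing z with
  | nil => exact .refl
  | cons y ys ih =>
    rw [List.pairwise_cons] at hz
    have hzy : z ≤ y := hz.1 y (by simp)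
    have h1 := ih y hz.2 (hx.trans_le hzy)
    have h2 := CK.ctx [(z, b)] [] h1
    simp only [List.append_nil] at h2
    refine Relation.ReflTransGen.trans (b := (z :: y :: x :: ys).map (·, b)) (by simpa using h2) ?_
    exact step_k3 b ys [z, y, x] [z, x, y] (Or.inr (Or.inr ⟨x, z, y, hx, hzy, rfl, rfl⟩))

theorem ri_head (r : List A) (x y : A) (h : (rowInsert r x).2 = some y) :
    ∃ z zs, (rowInsert r x).1 = z :: zs ∧ z ≤ x := by
  rcases r with _ | ⟨z, zs⟩
  · simp [rowInsert] at h
  · rcases lt_or_ge x z with h' | h'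
    · rw [ri_cons_lt _ h']; exact ⟨_, _, rfl, le_rfl⟩
    · rw [ri_cons_ge _ h']; exact ⟨_, _, rfl, h'⟩

theorem ri_none (r : List A) (x : A) (h : (rowInsert r x).2 = none) :
    (rowInsert r x).1 = r ++ [x] := by
  induction r with
  | nil => simp [rowInsert]
  | cons z zs ih =>
    rcases lt_or_ge x z with h' | h'
    · rw [ri_cons_lt _ h'] at h; simp at h
    · rw [ri_cons_ge _ h'] at h ⊢; simpa using ih h

theorem ri_some (b : B) (r : List A) (x y : A) (hr : r.Pairwise (· ≤ ·))
    (h : (rowInsert r x).2 = some y) :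
    CK ((r ++ [x]).map (·, b)) ((y :: (rowInsert r x).1).map (·, b)) := by
  induction r with
  | nil => simp [rowInsert] at h
  | cons z zs ih =>
    rcases lt_or_ge x z with h' | h'
    · rw [ri_cons_lt _ h'] at h ⊢
      simp only [Option.some.injEq] at h
      subst h
      exact ck_small b zs x z hr h'
    · rw [ri_cons_ge _ h'] at h ⊢
      rw [List.pairwise_cons] at hr
      have h2 := CK.ctx [(z, b)] [] (ih hr.2 h)
      simp only [List.append_nil] at h2
      obtain ⟨s, ss, hs, hsx⟩ := ri_head zs x y h
      have hzs : z ≤ s := ri_lb zs x z hr.1 h' s (by rw [hs]; simp)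
      have hsy : s < y := hsx.trans_lt (ri_mem _ _ _ h).2
      refine Relation.ReflTransGen.trans
        (b := (z :: y :: (rowInsert zs x).1).map (·, b)) (by simpa using h2) ?_
      simp only [hs]
      exact step_k3 b ss [z, y, s] [y, z, s] (Or.inl (Or.inl ⟨z, s, y, hzs, hsy, rfl, rfl⟩))

def readT : List (List A) → List A
  | [] => []
  | r :: rs => readT rs ++ r

theorem ck_tab (b : B) (T : List (List A)) (hT : ∀ r ∈ T, r.Pairwise (· ≤ ·)) (x : A) :
    CK ((readT T ++ [x]).map (·, b)) ((readT (tabInsert T x)).map (·, b)) := by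
  induction T generalizing x with
  | nil => exact .refl
  | cons r rs ih =>
    simp only [List.mem_cons, forall_eq_or_imp] at hT
    rw [tabInsert]
    have h1 := ri_none r x
    have h2 := fun y => ri_some b r x y hT.1
    rcases hp : rowInsert r x with ⟨r', _ | y⟩ <;> rw [hp] at h1 h2
    · have := h1 rfl
      simp only at this
      simp only [readT, this, List.append_assoc]
      exact .refl
    · have h3 := CK.app (.refl : CK ((readT rs).map (·, b)) _) (h2 y rfl)
      have h4 := CK.app (ih hT.2 y) (.refl : CK (r'.map (·, b)) _)
      simp only [readT, List.map_append, List.map_cons, List.append_assoc, List.map_nil,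
        List.cons_append, List.nil_append] at h3 h4 ⊢
      exact h3.trans h4

theorem ck_read (b : B) (w : List A) :
    CK (w.map (·, b)) ((readT (RSInsertionTableau w)).map (·, b)) := by
  induction w using List.reverseRecOn with
  | nil => exact .refl
  | append_singleton xs x ih =>
    have h1 := CK.app ih (.refl : CK [(x, b)] _)
    have h2 := ck_tab b (RSInsertionTableau xs) (foldl_sorted xs [] (by simp)) x
    simp only [RSInsertionTableau, List.foldl_append, List.foldl_cons, List.foldl_nil,
      List.map_append, List.map_cons, List.map_nil] at h1 h2 ⊢
    exact h1.trans h2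

theorem ck_of_RS (b : B) (w w' : List A) (h : RSInsertionTableau w = RSInsertionTableau w') :
    CK (w.map (·, b)) (w'.map (·, b)) := by
  have h1 := ck_read b w
  rw [h] at h1
  exact h1.trans (ck_read b w').symm'

theorem ck_past (x : A × B) (u : List (A × B)) (hu : ∀ y ∈ u, y.2 ≠ x.2) :
    CK (x :: u) (u ++ [x]) := by
  induction u with
  | nil => exact .refl
  | cons y ys ih =>
    simp only [List.mem_cons, forall_eq_or_imp] at hu
    refine .head (b := y :: x :: ys) (Or.inl ⟨[], ys, x, y, hu.1.symm, rfl, rfl⟩) ?_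
    have := CK.ctx [y] [] (ih hu.2)
    simpa using this

theorem ck_split (b : B) (w : List (A × B)) :
    CK w (w.filter (fun x => x.2 = b) ++ w.filter (fun x => x.2 ≠ b)) := by
  induction w with
  | nil => exact .refl
  | cons x xs ih =>
    have h1 := CK.ctx [x] [] ih
    simp only [List.append_nil] at h1
    by_cases hx : x.2 = b
    · simpa [List.filter_cons, hx] using h1
    · have h2 := ck_past x (xs.filter (fun x => x.2 = b)) (by
        intro y hy
        simp only [List.mem_filter, decide_eq_true_eq] at hy
        rw [hy.2]; exact fun h => hx h.symm)
      have h3 := CK.app h2 (.refl : CK (xs.filter (fun x => x.2 ≠ b)) _)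
      refine Relation.ReflTransGen.trans h1 ?_
      simpa [List.filter_cons, hx] using h3

theorem filter_map_colour (b : B) (w : List (A × B)) :
    ((w.filter (fun x => x.2 = b)).map Prod.fst).map (·, b) = w.filter (fun x => x.2 = b) := by
  induction w with
  | nil => rfl
  | cons x xs ih =>
    by_cases hx : x.2 = b
    · subst hx; simpa [List.filter_cons] using ih
    · simpa [List.filter_cons, hx] using ih

theorem RSO_filter (b : B) (w : List (A × B)) (c : B) :
    RSOInsertion (w.filter (fun x => x.2 ≠ b)) c = if c = b then [] else RSOInsertion w c := by
  simp only [RSOInsertion, List.filter_filter]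
  split_ifs with h
  · subst h
    have : w.filter (fun a => decide (a.2 = c) && decide (a.2 ≠ c)) = [] := by
      simp
    rw [this]; rfl
  · congr 2
    apply List.filter_congr
    intro x _
    by_cases hx : x.2 = c <;> simp [hx, h]

theorem tab_ne (T : List (List A)) (x : A) : tabInsert T x ≠ [] := by
  rcases T with _ | ⟨r, rs⟩
  · simp [tabInsert]
  · rw [tabInsert]; rcases rowInsert r x with ⟨r', _ | y⟩ <;> simp

theorem RS_nil (w : List A) (h : RSInsertionTableau w = []) : w = [] := by
  induction w using List.reverseRecOn with
  | nil => rfl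
  | append_singleton xs x ih =>
    simp only [RSInsertionTableau, List.foldl_append, List.foldl_cons, List.foldl_nil] at h
    exact absurd h (tab_ne _ _)

theorem ck_of_RSO (n : ℕ) : ∀ (w w' : List (A × B)), w.length ≤ n →
    RSOInsertion w = RSOInsertion w' → CK w w' := by
  induction n with
  | zero =>
    intro w w' hw h
    obtain rfl : w = [] := List.length_eq_zero_iff.1 (by omega)
    rcases w' with _ | ⟨y, ys⟩
    · exact .refl
    · have h1 := RS_nil _ (congrFun h y.2).symm
      simp at h1
  | succ n ih =>
    intro w w' hw h
    rcases w with _ | ⟨x, xs⟩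
    · exact ih [] w' (by simp) h
    · have hlen : ((x :: xs).filter (fun y => y.2 ≠ x.2)).length ≤ n := by
        have := List.length_filter_le (fun y : A × B => decide (y.2 ≠ x.2)) xs
        simp only [List.length_cons] at hw
        simp only [List.filter_cons, ne_eq, not_true_eq_false, decide_false] at this ⊢
        simp at this ⊢
        omega
      have h1 : CK ((x :: xs).filter (fun y => y.2 = x.2)) (w'.filter (fun y => y.2 = x.2)) := by
        have := ck_of_RS x.2 _ _ (congrFun h x.2)
        rwa [filter_map_colour, filter_map_colour] at this
      have h2 : CK ((x :: xs).filter (fun y => y.2 ≠ x.2)) (w'.filter (fun y => y.2 ≠ x.2)) := by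
        refine ih _ _ hlen ?_
        funext c
        rw [RSO_filter, RSO_filter, h]
      exact ((ck_split x.2 _).trans (CK.app h1 h2)).trans (ck_split x.2 w').symm'

end Helpers

/-- Two words `w`, `w'` with letters in `𝒜 × B` have the same insertion
`B`-tableau under the Robinson–Schensted–Okada correspondence if and only if they are
related by a finite chain of coloured Knuth relations. -/
theorem rso_knuth (w w' : List (A × B)) :
    RSOInsertion w = RSOInsertion w' ↔
      Relation.ReflTransGen ColouredKnuthStep w w' := by
  constructor
  · exact ck_of_RSO w.length w w' le_rfl
  · intro h
    induction h with
    | refl => rfl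
    | tail _ h ih => exact ih.trans (step_RSO _ _ h)
end
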